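/- Let f¹, f² : ℝ³ → ℝ be arbitrary smooth functions of (t, ζ₁, ζ₂), let γ¹, γ², χ : ℝ → ℝ be arbitrary smooth functions, and let ψ : ℝ³ → ℝ be a smooth solution of ζ_t + ψ_x ζ_y − ψ_y ζ_x = ∂_x[f¹(t,ζ_x,ζ_y)] + ∂_y[f²(t,ζ_x,ζ_y)], where ζ := ψ_xx + ψ_yy and ∂_x, ∂_y differentiate the full composition. Then ψ̃(t,x,y) := ψ(t, x − γ¹(t), y − γ²(t)) − γ¹'(t)·y + γ²'(t)·x + χ(t) is also a smooth solution of the same equation. -/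

import Mathlib

/-!
Statement 13: the kernel symmetries X(γ¹), Y(γ²), Z(χ) of the class of spatially
independent generalized vorticity equations
ζ_t + {ψ,ζ} = ∂_x[f¹(t,ζ_x,ζ_y)] + ∂_y[f²(t,ζ_x,ζ_y)].
-/

noncomputable section

/-- Partial derivative with respect to t. -/
def dT (f : ℝ × ℝ × ℝ → ℝ) (p : ℝ × ℝ × ℝ) : ℝ := fderiv ℝ f p (1, 0, 0)
/-- Partial derivative with respect to x. -/
def dX (f : ℝ × ℝ × ℝ → ℝ) (p : ℝ × ℝ × ℝ) : ℝ := fderiv ℝ f p (0, 1, 0)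
/-- Partial derivative with respect to y. -/
def dY (f : ℝ × ℝ × ℝ → ℝ) (p : ℝ × ℝ × ℝ) : ℝ := fderiv ℝ f p (0, 0, 1)

/-- The vorticity ζ := ψ_xx + ψ_yy. -/
def vort (ψ : ℝ × ℝ × ℝ → ℝ) : ℝ × ℝ × ℝ → ℝ := fun p => dX (dX ψ) p + dY (dY ψ) p

/-- The full composition (t,x,y) ↦ f(t, ζ_x(t,x,y), ζ_y(t,x,y)). -/
def fcomp3 (f : ℝ × ℝ × ℝ → ℝ) (ψ : ℝ × ℝ × ℝ → ℝ) : ℝ × ℝ × ℝ → ℝ :=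
  fun p => f (p.1, dX (vort ψ) p, dY (vort ψ) p)

/-- ψ is a smooth solution of the spatially independent generalized vorticity
equation ζ_t + ψ_x ζ_y − ψ_y ζ_x = ∂_x[f¹(t,ζ_x,ζ_y)] + ∂_y[f²(t,ζ_x,ζ_y)]. -/
def IsSpIndGenVortSol (f1 f2 : ℝ × ℝ × ℝ → ℝ) (ψ : ℝ × ℝ × ℝ → ℝ) : Prop :=
  ContDiff ℝ (⊤ : ℕ∞) ψ ∧ ∀ p : ℝ × ℝ × ℝ,
    dT (vort ψ) p + dX ψ p * dY (vort ψ) p - dY ψ p * dX (vort ψ) p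
      = dX (fcomp3 f1 ψ) p + dY (fcomp3 f2 ψ) p

/-!
In the frame translated by `(γ₁(t), γ₂(t))` the transformed stream function is `ψ` plus the stream
function of the uniform flow with velocity `(γ₁'(t), γ₂'(t))`. A uniform flow has no vorticity, so
the vorticity, and with it every flux `fⁱ(t, ζ_x, ζ_y)`, is merely carried along by the frame.
The extra terms that the moving frame adds to `ζ_t` are cancelled by the advection of `ζ` by the
uniform flow, while `∂_x` and `∂_y` commute with translations.
-/

section PartialDerivatives

variable {F G : ℝ × ℝ × ℝ → ℝ} {p : ℝ × ℝ × ℝ} {m n : WithTop ℕ∞}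

lemma contDiff_dX (hF : ContDiff ℝ n F) (hmn : m + 1 ≤ n) : ContDiff ℝ m (dX F) :=
  (hF.fderiv_right hmn).clm_apply contDiff_const

lemma contDiff_dY (hF : ContDiff ℝ n F) (hmn : m + 1 ≤ n) : ContDiff ℝ m (dY F) :=
  (hF.fderiv_right hmn).clm_apply contDiff_const

lemma differentiable_dX (hF : ContDiff ℝ 2 F) : Differentiable ℝ (dX F) :=
  (contDiff_dX (m := 1) hF one_add_one_eq_two.le).differentiable one_ne_zero

lemma differentiable_dY (hF : ContDiff ℝ 2 F) : Differentiable ℝ (dY F) :=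
  (contDiff_dY (m := 1) hF one_add_one_eq_two.le).differentiable one_ne_zero

lemma contDiff_vort (hF : ContDiff ℝ n F) (hmn : m + 2 ≤ n) : ContDiff ℝ m (vort F) := by
  have hmn' : m + 1 + 1 ≤ n := by rwa [add_assoc, one_add_one_eq_two]
  exact (contDiff_dX (contDiff_dX hF hmn') le_rfl).add (contDiff_dY (contDiff_dY hF hmn') le_rfl)

lemma dX_add (hF : Differentiable ℝ F) (hG : Differentiable ℝ G) :
    dX (F + G) = dX F + dX G := by
  ext p
  simp [dX, fderiv_add (hF p) (hG p)]

lemma dY_add (hF : Differentiable ℝ F) (hG : Differentiable ℝ G) :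
    dY (F + G) = dY F + dY G := by
  ext p
  simp [dY, fderiv_add (hF p) (hG p)]

lemma vort_add (hF : ContDiff ℝ 2 F) (hG : ContDiff ℝ 2 G) :
    vort (F + G) = vort F + vort G := by
  have hF' := hF.differentiable two_ne_zero
  have hG' := hG.differentiable two_ne_zero
  ext p
  simp only [vort, dX_add hF' hG', dY_add hF' hG', dX_add (differentiable_dX hF)
    (differentiable_dX hG), dY_add (differentiable_dY hF) (differentiable_dY hG), Pi.add_apply]
  ring

lemma dX_eq_deriv (hF : DifferentiableAt ℝ F p) :
    dX F p = deriv (fun x => F (p.1, x, p.2.2)) p.2.1 := by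
  have slice : HasDerivAt (fun x : ℝ => (p.1, x, p.2.2)) (0, 1, 0) p.2.1 :=
    (hasDerivAt_const _ _).prodMk ((hasDerivAt_id _).prodMk (hasDerivAt_const _ _))
  exact (hF.hasFDerivAt.comp_hasDerivAt _ slice).deriv.symm

lemma dY_eq_deriv (hF : DifferentiableAt ℝ F p) :
    dY F p = deriv (fun y => F (p.1, p.2.1, y)) p.2.2 := by
  have slice : HasDerivAt (fun y : ℝ => (p.1, p.2.1, y)) (0, 0, 1) p.2.2 :=
    (hasDerivAt_const _ _).prodMk ((hasDerivAt_const _ _).prodMk (hasDerivAt_id _))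
  exact (hF.hasFDerivAt.comp_hasDerivAt _ slice).deriv.symm

lemma differentiable_fcomp3 {f ψ : ℝ × ℝ × ℝ → ℝ} (hf : Differentiable ℝ f)
    (hψ : ContDiff ℝ 4 ψ) : Differentiable ℝ (fcomp3 f ψ) := by
  have hζ : ContDiff ℝ 2 (vort ψ) := contDiff_vort hψ two_add_two_eq_four.le
  exact hf.comp (differentiable_fst.prodMk ((differentiable_dX hζ).prodMk (differentiable_dY hζ)))

end PartialDerivatives

section UniformFlow

/-- The stream function of the flow with spatially uniform velocity `(-ψ_y, ψ_x) = (u(t), v(t))`,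
normalized by an arbitrary function `c` of time. -/
def uniformFlow (u v c : ℝ → ℝ) (p : ℝ × ℝ × ℝ) : ℝ :=
  v p.1 * p.2.1 - u p.1 * p.2.2 + c p.1

variable {u v c : ℝ → ℝ}

lemma contDiff_uniformFlow {n : WithTop ℕ∞} (hu : ContDiff ℝ n u) (hv : ContDiff ℝ n v)
    (hc : ContDiff ℝ n c) : ContDiff ℝ n (uniformFlow u v c) := by
  unfold uniformFlow
  fun_prop

lemma differentiable_uniformFlow (hu : Differentiable ℝ u) (hv : Differentiable ℝ v)
    (hc : Differentiable ℝ c) : Differentiable ℝ (uniformFlow u v c) := by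
  unfold uniformFlow
  fun_prop

lemma dX_uniformFlow (hu : Differentiable ℝ u) (hv : Differentiable ℝ v)
    (hc : Differentiable ℝ c) : dX (uniformFlow u v c) = fun p => v p.1 := by
  ext p
  simp [dX_eq_deriv (differentiable_uniformFlow hu hv hc p), uniformFlow]

lemma dY_uniformFlow (hu : Differentiable ℝ u) (hv : Differentiable ℝ v)
    (hc : Differentiable ℝ c) : dY (uniformFlow u v c) = fun p => -u p.1 := by
  ext p
  simp [dY_eq_deriv (differentiable_uniformFlow hu hv hc p), uniformFlow]

lemma vort_uniformFlow (hu : Differentiable ℝ u) (hv : Differentiable ℝ v)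
    (hc : Differentiable ℝ c) : vort (uniformFlow u v c) = 0 := by
  ext p
  have hxx : dX (fun q => v q.1) p = 0 := by
    simp [dX_eq_deriv (F := fun q => v q.1) (p := p) (by fun_prop)]
  have hyy : dY (fun q => -u q.1) p = 0 := by
    simp [dY_eq_deriv (F := fun q => -u q.1) (p := p) (by fun_prop)]
  simp [vort, dX_uniformFlow hu hv hc, dY_uniformFlow hu hv hc, hxx, hyy]

end UniformFlow

section MovingFrame

/-- The coordinates of a space-time point in the frame whose origin moves along `(γ₁(t), γ₂(t))`. -/
def movingFrame (γ₁ γ₂ : ℝ → ℝ) (p : ℝ × ℝ × ℝ) : ℝ × ℝ × ℝ :=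
  (p.1, p.2.1 - γ₁ p.1, p.2.2 - γ₂ p.1)

variable {γ₁ γ₂ : ℝ → ℝ}

lemma contDiff_movingFrame {n : WithTop ℕ∞} (hγ₁ : ContDiff ℝ n γ₁) (hγ₂ : ContDiff ℝ n γ₂) :
    ContDiff ℝ n (movingFrame γ₁ γ₂) := by
  unfold movingFrame
  fun_prop

lemma differentiable_movingFrame (hγ₁ : Differentiable ℝ γ₁) (hγ₂ : Differentiable ℝ γ₂) :
    Differentiable ℝ (movingFrame γ₁ γ₂) := by
  unfold movingFrame
  fun_prop

lemma fderiv_movingFrame_apply {p : ℝ × ℝ × ℝ} (hγ₁ : DifferentiableAt ℝ γ₁ p.1)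
    (hγ₂ : DifferentiableAt ℝ γ₂ p.1) (w : ℝ × ℝ × ℝ) :
    fderiv ℝ (movingFrame γ₁ γ₂) p w =
      (w.1, w.2.1 - deriv γ₁ p.1 * w.1, w.2.2 - deriv γ₂ p.1 * w.1) := by
  have ht : HasFDerivAt (𝕜 := ℝ) (Prod.fst : ℝ × ℝ × ℝ → ℝ) _ p := hasFDerivAt_fst
  have hx : HasFDerivAt (𝕜 := ℝ) (fun q : ℝ × ℝ × ℝ => q.2.1) _ p := hasFDerivAt_snd.fst
  have hy : HasFDerivAt (𝕜 := ℝ) (fun q : ℝ × ℝ × ℝ => q.2.2) _ p := hasFDerivAt_snd.snd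
  have hframe : HasFDerivAt (movingFrame γ₁ γ₂) _ p :=
    ht.prodMk ((hx.sub (hγ₁.hasDerivAt.comp_hasFDerivAt p ht)).prodMk
      (hy.sub (hγ₂.hasDerivAt.comp_hasFDerivAt p ht)))
  simp [hframe.fderiv]

variable {F : ℝ × ℝ × ℝ → ℝ}

lemma fderiv_comp_movingFrame_apply (hγ₁ : Differentiable ℝ γ₁) (hγ₂ : Differentiable ℝ γ₂)
    (hF : Differentiable ℝ F) (p w : ℝ × ℝ × ℝ) :
    fderiv ℝ (F ∘ movingFrame γ₁ γ₂) p w = fderiv ℝ F (movingFrame γ₁ γ₂ p)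
      (w.1, w.2.1 - deriv γ₁ p.1 * w.1, w.2.2 - deriv γ₂ p.1 * w.1) := by
  rw [fderiv_comp p (hF _) (differentiable_movingFrame hγ₁ hγ₂ p),
    ContinuousLinearMap.comp_apply, fderiv_movingFrame_apply (hγ₁ _) (hγ₂ _)]

lemma dT_comp_movingFrame (hγ₁ : Differentiable ℝ γ₁) (hγ₂ : Differentiable ℝ γ₂)
    (hF : Differentiable ℝ F) (p : ℝ × ℝ × ℝ) :
    dT (F ∘ movingFrame γ₁ γ₂) p = dT F (movingFrame γ₁ γ₂ p)
      - deriv γ₁ p.1 * dX F (movingFrame γ₁ γ₂ p) - deriv γ₂ p.1 * dY F (movingFrame γ₁ γ₂ p) := by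
  have hdir : ((1 : ℝ), 0 - deriv γ₁ p.1 * 1, 0 - deriv γ₂ p.1 * 1) =
      (1, 0, 0) - deriv γ₁ p.1 • (0, 1, 0) - deriv γ₂ p.1 • (0, 0, 1) := by
    simp
  simp only [dT, dX, dY, fderiv_comp_movingFrame_apply hγ₁ hγ₂ hF, hdir, map_sub, map_smul,
    smul_eq_mul]

lemma dX_comp_movingFrame (hγ₁ : Differentiable ℝ γ₁) (hγ₂ : Differentiable ℝ γ₂)
    (hF : Differentiable ℝ F) :
    dX (F ∘ movingFrame γ₁ γ₂) = dX F ∘ movingFrame γ₁ γ₂ := by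
  ext p
  simp [dX, fderiv_comp_movingFrame_apply hγ₁ hγ₂ hF]

lemma dY_comp_movingFrame (hγ₁ : Differentiable ℝ γ₁) (hγ₂ : Differentiable ℝ γ₂)
    (hF : Differentiable ℝ F) :
    dY (F ∘ movingFrame γ₁ γ₂) = dY F ∘ movingFrame γ₁ γ₂ := by
  ext p
  simp [dY, fderiv_comp_movingFrame_apply hγ₁ hγ₂ hF]

lemma vort_comp_movingFrame (hγ₁ : Differentiable ℝ γ₁) (hγ₂ : Differentiable ℝ γ₂)
    (hF : ContDiff ℝ 2 F) : vort (F ∘ movingFrame γ₁ γ₂) = vort F ∘ movingFrame γ₁ γ₂ := by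
  have hF' := hF.differentiable two_ne_zero
  ext p
  simp only [vort, dX_comp_movingFrame hγ₁ hγ₂ hF', dY_comp_movingFrame hγ₁ hγ₂ hF',
    dX_comp_movingFrame hγ₁ hγ₂ (differentiable_dX hF),
    dY_comp_movingFrame hγ₁ hγ₂ (differentiable_dY hF), Function.comp_apply]

lemma fcomp3_eq_comp_movingFrame {ψ φ : ℝ × ℝ × ℝ → ℝ} (hγ₁ : Differentiable ℝ γ₁)
    (hγ₂ : Differentiable ℝ γ₂) (hψ : Differentiable ℝ (vort ψ))
    (hφ : vort φ = vort ψ ∘ movingFrame γ₁ γ₂) (f : ℝ × ℝ × ℝ → ℝ) :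
    fcomp3 f φ = fcomp3 f ψ ∘ movingFrame γ₁ γ₂ := by
  ext p
  simp only [fcomp3, hφ, dX_comp_movingFrame hγ₁ hγ₂ hψ, dY_comp_movingFrame hγ₁ hγ₂ hψ,
    Function.comp_apply]
  rfl

end MovingFrame

section Boost

/-- The action on stream functions of the symmetries generated by `X(γ₁)`, `Y(γ₂)` and `Z(χ)`. -/
def boost (γ₁ γ₂ χ : ℝ → ℝ) (ψ : ℝ × ℝ × ℝ → ℝ) : ℝ × ℝ × ℝ → ℝ :=
  fun p => ψ (p.1, p.2.1 - γ₁ p.1, p.2.2 - γ₂ p.1)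
    - deriv γ₁ p.1 * p.2.2 + deriv γ₂ p.1 * p.2.1 + χ p.1

/-- The material derivative `F_t + {ψ, F}` of a scalar `F` along the flow with stream function
`ψ`; for `F = vort ψ` it is the left-hand side of the vorticity equation. -/
def materialDeriv (ψ F : ℝ × ℝ × ℝ → ℝ) (p : ℝ × ℝ × ℝ) : ℝ :=
  dT F p + dX ψ p * dY F p - dY ψ p * dX F p

variable {γ₁ γ₂ χ : ℝ → ℝ} {ψ F : ℝ × ℝ × ℝ → ℝ}

lemma boost_eq_comp_movingFrame_add_uniformFlow (γ₁ γ₂ χ : ℝ → ℝ) (ψ : ℝ × ℝ × ℝ → ℝ) :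
    boost γ₁ γ₂ χ ψ = ψ ∘ movingFrame γ₁ γ₂ + uniformFlow (deriv γ₁) (deriv γ₂) χ := by
  ext p
  simp only [boost, movingFrame, uniformFlow, Pi.add_apply, Function.comp_apply]
  ring

lemma contDiff_boost {n : WithTop ℕ∞} (hγ₁ : ContDiff ℝ (n + 1) γ₁)
    (hγ₂ : ContDiff ℝ (n + 1) γ₂) (hχ : ContDiff ℝ n χ) (hψ : ContDiff ℝ n ψ) :
    ContDiff ℝ n (boost γ₁ γ₂ χ ψ) := by
  have hframe := contDiff_movingFrame (hγ₁.of_le le_self_add) (hγ₂.of_le le_self_add)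
  rw [boost_eq_comp_movingFrame_add_uniformFlow]
  exact (hψ.comp hframe).add (contDiff_uniformFlow hγ₁.deriv' hγ₂.deriv' hχ)

lemma vort_boost (hγ₁ : ContDiff ℝ 3 γ₁) (hγ₂ : ContDiff ℝ 3 γ₂) (hχ : ContDiff ℝ 2 χ)
    (hψ : ContDiff ℝ 2 ψ) : vort (boost γ₁ γ₂ χ ψ) = vort ψ ∘ movingFrame γ₁ γ₂ := by
  have hγ₁' : ContDiff ℝ 2 (deriv γ₁) := ContDiff.deriv' (by rwa [two_add_one_eq_three])
  have hγ₂' : ContDiff ℝ 2 (deriv γ₂) := ContDiff.deriv' (by rwa [two_add_one_eq_three])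
  have hframe : ContDiff ℝ 2 (movingFrame γ₁ γ₂) :=
    (contDiff_movingFrame hγ₁ hγ₂).of_le (by norm_num)
  rw [boost_eq_comp_movingFrame_add_uniformFlow,
    vort_add (hψ.comp hframe) (contDiff_uniformFlow hγ₁' hγ₂' hχ),
    vort_comp_movingFrame (hγ₁.differentiable three_ne_zero) (hγ₂.differentiable three_ne_zero) hψ,
    vort_uniformFlow (hγ₁'.differentiable two_ne_zero) (hγ₂'.differentiable two_ne_zero)
      (hχ.differentiable two_ne_zero), add_zero]

lemma materialDeriv_boost (hγ₁ : ContDiff ℝ 2 γ₁) (hγ₂ : ContDiff ℝ 2 γ₂)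
    (hχ : Differentiable ℝ χ) (hψ : Differentiable ℝ ψ) (hF : Differentiable ℝ F) :
    materialDeriv (boost γ₁ γ₂ χ ψ) (F ∘ movingFrame γ₁ γ₂) =
      materialDeriv ψ F ∘ movingFrame γ₁ γ₂ := by
  have hγ₁' := hγ₁.differentiable two_ne_zero
  have hγ₂' := hγ₂.differentiable two_ne_zero
  have hframe := hψ.comp (differentiable_movingFrame hγ₁' hγ₂')
  have hdγ₁ := hγ₁.differentiable_deriv_two
  have hdγ₂ := hγ₂.differentiable_deriv_two
  have hflow := differentiable_uniformFlow hdγ₁ hdγ₂ hχ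
  ext p
  simp only [materialDeriv, boost_eq_comp_movingFrame_add_uniformFlow, dX_add hframe hflow,
    dY_add hframe hflow, dT_comp_movingFrame hγ₁' hγ₂' hF, dX_comp_movingFrame hγ₁' hγ₂' hF,
    dY_comp_movingFrame hγ₁' hγ₂' hF, dX_comp_movingFrame hγ₁' hγ₂' hψ,
    dY_comp_movingFrame hγ₁' hγ₂' hψ, dX_uniformFlow hdγ₁ hdγ₂ hχ, dY_uniformFlow hdγ₁ hdγ₂ hχ,
    Pi.add_apply, Function.comp_apply]
  ring

end Boost

theorem kernel_symmetries_of_spatially_independent_class_general {f₁ f₂ ψ : ℝ × ℝ × ℝ → ℝ}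
    {γ₁ γ₂ χ : ℝ → ℝ} (hf₁ : Differentiable ℝ f₁) (hf₂ : Differentiable ℝ f₂)
    (hγ₁ : ContDiff ℝ (⊤ : ℕ∞) γ₁) (hγ₂ : ContDiff ℝ (⊤ : ℕ∞) γ₂)
    (hχ : ContDiff ℝ (⊤ : ℕ∞) χ) (h : IsSpIndGenVortSol f₁ f₂ ψ) :
    IsSpIndGenVortSol f₁ f₂ (boost γ₁ γ₂ χ ψ) := by
  obtain ⟨hψ, hψ_eq⟩ := h
  have hγ₁' : Differentiable ℝ γ₁ := hγ₁.differentiable (by simp)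
  have hγ₂' : Differentiable ℝ γ₂ := hγ₂.differentiable (by simp)
  have hζ : Differentiable ℝ (vort ψ) :=
    (contDiff_vort (m := (⊤ : ℕ∞)) hψ le_rfl).differentiable (by simp)
  have hflux {f : ℝ × ℝ × ℝ → ℝ} (hf : Differentiable ℝ f) : Differentiable ℝ (fcomp3 f ψ) :=
    differentiable_fcomp3 hf (contDiff_infty.1 hψ 4)
  have hvort : vort (boost γ₁ γ₂ χ ψ) = vort ψ ∘ movingFrame γ₁ γ₂ :=
    vort_boost (contDiff_infty.1 hγ₁ 3) (contDiff_infty.1 hγ₂ 3) (contDiff_infty.1 hχ 2)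
      (contDiff_infty.1 hψ 2)
  refine ⟨contDiff_boost hγ₁ hγ₂ hχ hψ, fun p => ?_⟩
  change materialDeriv (boost γ₁ γ₂ χ ψ) (vort (boost γ₁ γ₂ χ ψ)) p = _
  rw [fcomp3_eq_comp_movingFrame hγ₁' hγ₂' hζ hvort, fcomp3_eq_comp_movingFrame hγ₁' hγ₂' hζ hvort,
    dX_comp_movingFrame hγ₁' hγ₂' (hflux hf₁), dY_comp_movingFrame hγ₁' hγ₂' (hflux hf₂), hvort,
    materialDeriv_boost (contDiff_infty.1 hγ₁ 2) (contDiff_infty.1 hγ₂ 2)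
      (hχ.differentiable (by simp)) (hψ.differentiable (by simp)) hζ]
  exact hψ_eq (movingFrame γ₁ γ₂ p)

theorem kernel_symmetries_of_spatially_independent_class
    (f1 f2 : ℝ × ℝ × ℝ → ℝ) (hf1 : ContDiff ℝ (⊤ : ℕ∞) f1) (hf2 : ContDiff ℝ (⊤ : ℕ∞) f2)
    (γ1 γ2 χ : ℝ → ℝ)
    (hγ1 : ContDiff ℝ (⊤ : ℕ∞) γ1) (hγ2 : ContDiff ℝ (⊤ : ℕ∞) γ2) (hχ : ContDiff ℝ (⊤ : ℕ∞) χ)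
    (ψ : ℝ × ℝ × ℝ → ℝ) (h : IsSpIndGenVortSol f1 f2 ψ) :
    IsSpIndGenVortSol f1 f2
      (fun p => ψ (p.1, p.2.1 - γ1 p.1, p.2.2 - γ2 p.1)
        - deriv γ1 p.1 * p.2.2 + deriv γ2 p.1 * p.2.1 + χ p.1) :=
  kernel_symmetries_of_spatially_independent_class_general (hf1.differentiable (by simp))
    (hf2.differentiable (by simp)) hγ1 hγ2 hχ h
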